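/- Let t ≥ 3 be an odd integer and let M be a matroid admitting a cyclic (t−1,t)-ordering e_1, e_2, …, e_n with n ≥ 6t−10. Then: (i) for every index i, the set σ[i, i+t−1] = {e_i, e_{i+1}, …, e_{i+t−1}} is either a t-element circuit of M or a t-element cocircuit of M, but not both; (ii) for every index i, σ[i, i+t−1] is a t-element circuit if and only if σ[i+1, i+t] is a t-element cocircuit; and (iii) for all indices i and j with j ≡ i (mod 2), if σ[i, i+t−1] is a t-element circuit then σ[j, j+t−1] is a t-element circuit. -/

import Mathlib

open Set

namespace CyclicArr

variable {α : Type*}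

/-- `C` is a circuit of the matroid `M`: a minimal dependent set. -/
def Cct (M : Matroid α) (C : Set α) : Prop := Minimal M.Dep C

/-- The set of `len` consecutive elements `{e_i, e_{i+1}, …, e_{i+len-1}}`
in a cyclic ordering `e`, subscripts mod `n`. -/
def seg {n : ℕ} (e : ZMod n → α) (i : ℤ) (len : ℕ) : Set α :=
  (fun k : ℕ => e ((i + k : ℤ) : ZMod n)) '' Set.Iio len

/-- `e` is a cyclic ordering of (the ground set of) `M`. -/
def CyclicOrd {n : ℕ} (M : Matroid α) (e : ZMod n → α) : Prop :=
  Function.Injective e ∧ Set.range e = M.E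

/-- `e` is a cyclic `(t-1, t)`-ordering of `M`: every `t-1` consecutive elements
are contained in a `t`-element circuit and a `t`-element cocircuit. -/
def CyclicPropOrd {n : ℕ} (M : Matroid α) (t : ℕ) (e : ZMod n → α) : Prop :=
  CyclicOrd M e ∧
  ∀ i : ℤ, (∃ C, Cct M C ∧ C.ncard = t ∧ seg e i (t-1) ⊆ C) ∧
           (∃ C, Cct M✶ C ∧ C.ncard = t ∧ seg e i (t-1) ⊆ C)

/-! Write `W i` for the `i`-th window of `t - 1` consecutive elements. It extends to a circuit
`W i ∪ {c i}` and to a cocircuit `W i ∪ {d i}`, and a circuit never meets a cocircuit in exactly one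
element. Hence `c i ∈ W j ↔ d j ∈ W i` for disjoint windows, while for windows sharing a single
element `c i ∈ W j`, `d j ∈ W i` or `c i = d j`. Playing these two rules off against each other
forces `c i` first to lie in a window meeting `W i`, and then to be adjacent to `W i`. So among any
two successive windows of `t` elements there is a circuit, and dually a cocircuit. Windows of `t`
elements at distance `t - 1` share a single element, so they are not a circuit and a cocircuit;
therefore circuits and cocircuits alternate, and as `t - 1` is even they do so in opposite phase. -/

/-! ### Consecutive elements of a cyclic ordering -/

section Seg

variable {n : ℕ} {e : ZMod n → α} {i j k : ℤ} {a b l : ℕ} {x : α}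

theorem mem_seg : x ∈ seg e i l ↔ ∃ z : ℤ, i ≤ z ∧ z < i + l ∧ e z = x := by
  constructor
  · rintro ⟨k, hk, rfl⟩
    have hk : k < l := hk
    exact ⟨i + k, by omega, by omega, rfl⟩
  · rintro ⟨z, hiz, hzl, rfl⟩
    refine ⟨(z - i).toNat, show _ < l by omega, ?_⟩
    simp only [Int.toNat_of_nonneg (sub_nonneg.2 hiz), add_sub_cancel]

theorem apply_mem_seg (hik : i ≤ k) (hkl : k < i + l) : e k ∈ seg e i l :=
  mem_seg.2 ⟨k, hik, hkl, rfl⟩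

theorem seg_card_eq_range (hn : 0 < n) (i : ℤ) : seg e i n = range e := by
  have : NeZero n := ⟨hn.ne'⟩
  refine Subset.antisymm (image_subset_iff.2 fun _ _ => mem_range_self _) ?_
  rintro _ ⟨y, rfl⟩
  exact ⟨(y - i).val, ZMod.val_lt _, by simp⟩

theorem finite_seg : (seg e i l).Finite :=
  (finite_Iio l).image _

theorem seg_succ_eq_insert_last :
    seg e i (l + 1) = insert (e ((i + l : ℤ) : ZMod n)) (seg e i l) := by
  simp only [seg, ← Order.succ_eq_add_one, Order.Iio_succ_eq_insert, image_insert_eq]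

theorem seg_succ_eq_insert_first : seg e i (l + 1) = insert (e (i : ZMod n)) (seg e (i + 1) l) := by
  ext x
  simp only [mem_insert_iff, mem_seg]
  constructor
  · rintro ⟨z, hiz, hzl, rfl⟩
    obtain rfl | hiz := hiz.eq_or_lt
    · exact .inl rfl
    · exact .inr ⟨z, by omega, by omega, rfl⟩
  · rintro (rfl | ⟨z, hiz, hzl, rfl⟩)
    · exact ⟨i, by omega, by omega, rfl⟩
    · exact ⟨z, by omega, by omega, rfl⟩

theorem seg_subset_union (hji : j ≤ i) (hkj : k ≤ j + a) (hend : i + l ≤ k + b) :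
    seg e i l ⊆ seg e j a ∪ seg e k b := by
  intro x hx
  obtain ⟨z, hiz, hzl, rfl⟩ := mem_seg.1 hx
  obtain hz | hz := lt_or_ge z (j + a)
  · exact .inl (apply_mem_seg (by omega) hz)
  · exact .inr (apply_mem_seg (by omega) (by omega))

theorem seg_comp_neg : seg (fun y => e (-y)) i l = seg e (1 - l - i) l := by
  ext x
  simp only [mem_seg]
  constructor <;>
  · rintro ⟨z, hiz, hzl, rfl⟩
    exact ⟨-z, by omega, by omega, by simp⟩

theorem disjoint_seg (he : Function.Injective e) (hij : i + a ≤ j) (hji : j + b ≤ i + n) :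
    Disjoint (seg e i a) (seg e j b) := by
  rw [disjoint_left]
  intro x hxi hxj
  obtain ⟨z, hiz, hza, rfl⟩ := mem_seg.1 hxi
  obtain ⟨w, hjw, hwb, hwz⟩ := mem_seg.1 hxj
  have hdvd : (n : ℤ) ∣ w - z := (ZMod.intCast_eq_intCast_iff_dvd_sub _ _ _).1 (he hwz.symm)
  have := Int.le_of_dvd (by omega) hdvd
  omega

theorem apply_notMem_seg (he : Function.Injective e) (hik : i + l ≤ k) (hki : k < i + n) :
    e k ∉ seg e i l :=
  (disjoint_seg (b := 1) he hik (by omega)).notMem_of_mem_right (apply_mem_seg le_rfl (by omega))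

theorem seg_inter_seg_eq_singleton (he : Function.Injective e) (hl : 2 * l + 1 ≤ n) :
    seg e i (l + 1) ∩ seg e (i + l) (l + 1) = {e ((i + l : ℤ) : ZMod n)} := by
  rw [seg_succ_eq_insert_last, insert_inter_of_mem (apply_mem_seg le_rfl (by omega)),
    (disjoint_seg he le_rfl (by omega)).inter_eq, insert_empty_eq]

theorem ncard_seg (he : Function.Injective e) (hl : l ≤ n) (i : ℤ) : (seg e i l).ncard = l := by
  induction l with
  | zero => simp [seg]
  | succ l ih =>
    rw [seg_succ_eq_insert_last,
      ncard_insert_of_notMem (apply_notMem_seg he le_rfl (by omega)) finite_seg, ih (by omega)]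

end Seg

/-! ### Extensions by one element with the orthogonality property -/

/-- `A` is obtained by sliding `A'` one step towards the disjoint set `B`, so that it picks up
exactly the point `p` of `B`. This captures, without reference to a direction, three windows of
equal length `l` starting at `i - 1`, `i`, `i + l - 1`, or at the mirror images of these. -/
structure SlidesInto (A' A B : Set α) (p : α) : Prop where
  disjoint : Disjoint A' B
  subset : A ⊆ A' ∪ B
  inter_eq : A ∩ B = {p}

/-- Points `c i` and `d i` outside `W i` such that no set `W i ∪ {c i}` meets a set `W j ∪ {d j}` in
exactly one element: the property of circuits `W i ∪ {c i}` and cocircuits `W j ∪ {d j}` from which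
the position of the points is determined. -/
structure OrthogonalExtensions {ι : Type*} (W : ι → Set α) (c d : ι → α) : Prop where
  left_notMem : ∀ i, c i ∉ W i
  right_notMem : ∀ i, d i ∉ W i
  inter_ne_singleton : ∀ i j x, insert (c i) (W i) ∩ insert (d j) (W j) ≠ {x}

namespace OrthogonalExtensions

section Abstract

variable {ι κ : Type*} {W : ι → Set α} {c d : ι → α} {i j j' a a' b : ι} {p x : α}

theorem symm (h : OrthogonalExtensions W c d) : OrthogonalExtensions W d c where
  left_notMem := h.right_notMem
  right_notMem := h.left_notMem
  inter_ne_singleton i j x := inter_comm _ _ ▸ h.inter_ne_singleton j i x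

theorem comp (h : OrthogonalExtensions W c d) (f : κ → ι) :
    OrthogonalExtensions (W ∘ f) (c ∘ f) (d ∘ f) where
  left_notMem i := h.left_notMem (f i)
  right_notMem i := h.right_notMem (f i)
  inter_ne_singleton i j := h.inter_ne_singleton (f i) (f j)

theorem right_mem_of_left_mem (h : OrthogonalExtensions W c d) (hij : Disjoint (W i) (W j))
    (hc : c i ∈ W j) : d j ∈ W i := by
  by_contra hd
  refine h.inter_ne_singleton i j (c i) ?_
  rw [insert_inter_of_mem (mem_insert_of_mem _ hc), inter_insert_of_notMem hd, hij.inter_eq,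
    insert_empty_eq]

theorem left_mem_iff_right_mem (h : OrthogonalExtensions W c d) (hij : Disjoint (W i) (W j)) :
    c i ∈ W j ↔ d j ∈ W i :=
  ⟨h.right_mem_of_left_mem hij, h.symm.right_mem_of_left_mem hij.symm⟩

theorem right_mem_or_eq_of_left_notMem (h : OrthogonalExtensions W c d) (hij : W i ∩ W j = {x})
    (hc : c i ∉ W j) : d j ∈ W i ∨ c i = d j := by
  by_contra! hd
  refine h.inter_ne_singleton i j x ?_
  rw [inter_insert_of_notMem (by simpa [hd.1] using hd.2.symm), insert_inter_of_notMem hc, hij]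

theorem right_eq_of_left_mem (h : OrthogonalExtensions W c d)
    (hslide : SlidesInto (W a') (W a) (W b) p) (hdb : d b ∈ W a)
    (ha'j : Disjoint (W a') (W j)) (hbj : Disjoint (W b) (W j)) (hca : c a ∈ W j) : d j = p := by
  have hdb' : d b ∈ W a' := (hslide.subset hdb).resolve_right (h.right_notMem b)
  have hca' : c a' ∈ W b := (h.left_mem_iff_right_mem hslide.disjoint).2 hdb'
  have haj : Disjoint (W a) (W j) := (ha'j.union_left hbj).mono_left hslide.subset
  have hdja : d j ∈ W a := h.right_mem_of_left_mem haj hca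
  have hdja' : d j ∉ W a' := fun hdj =>
    hbj.notMem_of_mem_left hca' ((h.left_mem_iff_right_mem ha'j).2 hdj)
  have hdjb : d j ∈ W b := (hslide.subset hdja).resolve_left hdja'
  exact hslide.inter_eq.subset ⟨hdja, hdjb⟩

theorem left_notMem_of_left_mem (h : OrthogonalExtensions W c d)
    (hslide : SlidesInto (W a') (W a) (W b) p) (hslide' : SlidesInto (W j') (W j) (W i) x)
    (hdb : d b ∈ W a) (ha'j : Disjoint (W a') (W j)) (hbj : Disjoint (W b) (W j))
    (hai : Disjoint (W a) (W i)) (hbi : Disjoint (W b) (W i)) (haj' : Disjoint (W a) (W j'))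
    (hca : c a ∈ W j) : c a ∉ W j' := by
  intro hca'
  have hpb : p ∈ W b := (hslide.inter_eq.superset rfl).2
  have hdj : d j = p := h.right_eq_of_left_mem hslide hdb ha'j hbj hca
  have hdji : d j ∉ W i := hdj ▸ hbi.notMem_of_mem_left hpb
  have hci : c i ∈ W j := by
    refine (h.symm.right_mem_or_eq_of_left_notMem hslide'.inter_eq hdji).resolve_right fun hdc => ?_
    have hcib : c i ∈ W b := hdc ▸ hdj ▸ hpb
    exact hai.notMem_of_mem_left hdb (h.right_mem_of_left_mem hbi.symm hcib)
  have hcij' : c i ∈ W j' := (hslide'.subset hci).resolve_right (h.left_notMem i)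
  have hdj'i : d j' ∈ W i := h.right_mem_of_left_mem hslide'.disjoint.symm hcij'
  have hdj'a : d j' ∈ W a := h.right_mem_of_left_mem haj' hca'
  exact hai.notMem_of_mem_left hdj'a hdj'i

end Abstract

end OrthogonalExtensions

/-! ### The extending elements are adjacent to their windows -/

section Windows

variable {n m : ℕ} {e : ZMod n → α} {c d : ℤ → α} {i k : ℤ}

theorem seg_slidesInto_right (he : Function.Injective e) (hn : 2 * m + 2 ≤ n) (i : ℤ) :
    SlidesInto (seg e (i - 1) (m + 1)) (seg e i (m + 1)) (seg e (i + m) (m + 1))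
      (e ((i + m : ℤ) : ZMod n)) where
  disjoint := disjoint_seg he (by omega) (by omega)
  subset := seg_subset_union (by omega) (by omega) (by omega)
  inter_eq := seg_inter_seg_eq_singleton he (by omega)

theorem seg_slidesInto_left (he : Function.Injective e) (hn : 2 * m + 2 ≤ n) (i : ℤ) :
    SlidesInto (seg e (i + 1) (m + 1)) (seg e i (m + 1)) (seg e (i - m) (m + 1)) (e i) where
  disjoint := (disjoint_seg he (by omega) (by omega)).symm
  subset := union_comm _ _ ▸ seg_subset_union (by omega) (by omega) (by omega)
  inter_eq := by
    simpa [inter_comm] using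
      seg_inter_seg_eq_singleton (i := i - m) he (show 2 * m + 1 ≤ n by omega)

namespace OrthogonalExtensions

theorem reverse (h : OrthogonalExtensions (fun i => seg e i (m + 1)) c d) :
    OrthogonalExtensions (fun i => seg (fun y => e (-y)) i (m + 1)) (fun i => c (-m - i))
      (fun i => d (-m - i)) := by
  have hstart : 1 - ((m + 1 : ℕ) : ℤ) = -m := by omega
  simp only [seg_comp_neg, hstart]
  exact h.comp fun i => -m - i

theorem right_notMem_of_left_eq_far (h : OrthogonalExtensions (fun i => seg e i (m + 1)) c d)
    (he : Function.Injective e) (hn : 6 * m + 2 ≤ n) (hm : 1 ≤ m)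
    (hik : i + 2 * m + 1 ≤ k) (hki : k + m + 1 ≤ i + n) (hc : c i = e k) :
    d (i + m) ∉ seg e i (m + 1) := by
  intro hd
  have hslide := seg_slidesInto_right he (show 2 * m + 2 ≤ n by omega)
  have hslide' := seg_slidesInto_left he (show 2 * m + 2 ≤ n by omega)
  -- The window at `e k` slides into the one on whichever side of it stays clear of `W i`.
  obtain hk | hk := le_or_gt (i + 4 * m + 1) k
  · exact h.left_notMem_of_left_mem (hslide i) (hslide' (k - m)) hd
      (disjoint_seg he (by omega) (by omega)) (disjoint_seg he (by omega) (by omega))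
      (disjoint_seg he (by omega) (by omega)) (disjoint_seg he (by omega) (by omega))
      (disjoint_seg he (by omega) (by omega))
      (hc ▸ apply_mem_seg (by omega) (by omega)) (hc ▸ apply_mem_seg (by omega) (by omega))
  · exact h.left_notMem_of_left_mem (hslide i) (hslide k) hd
      (disjoint_seg he (by omega) (by omega)) (disjoint_seg he (by omega) (by omega))
      (disjoint_seg he (by omega) (by omega)) (disjoint_seg he (by omega) (by omega))
      (disjoint_seg he (by omega) (by omega))
      (hc ▸ apply_mem_seg (by omega) (by omega)) (hc ▸ apply_mem_seg (by omega) (by omega))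

theorem left_eq_right_of_left_eq_far (h : OrthogonalExtensions (fun i => seg e i (m + 1)) c d)
    (he : Function.Injective e) (hn : 6 * m + 2 ≤ n) (hm : 1 ≤ m)
    (hik : i + 2 * m + 1 ≤ k) (hki : k + m + 1 ≤ i + n) (hc : c i = e k) : c i = d (i + m) := by
  have hcr : c i ∉ seg e (i + m) (m + 1) := hc ▸ apply_notMem_seg he (by omega) (by omega)
  have hinter := seg_inter_seg_eq_singleton (i := i) he (show 2 * m + 1 ≤ n by omega)
  exact (h.right_mem_or_eq_of_left_notMem hinter hcr).resolve_left
    (h.right_notMem_of_left_eq_far he hn hm hik hki hc)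

theorem left_ne_apply_of_far (h : OrthogonalExtensions (fun i => seg e i (m + 1)) c d)
    (he : Function.Injective e) (hn : 6 * m + 2 ≤ n) (hm : 1 ≤ m)
    (hik : i + 2 * m + 1 ≤ k) (hki : k + m + 1 ≤ i + n) : c i ≠ e k := by
  intro hc
  have hdr : e k = d (i + m) := hc ▸ h.left_eq_right_of_left_eq_far he hn hm hik hki hc
  have hdl : e k = d (i - m) := by
    have hrev := h.reverse.left_eq_right_of_left_eq_far (i := -m - i) (k := n - k)
      (he.comp neg_injective) hn hm (by omega) (by omega)
    have hindex : -m - (-m - i + m) = i - m := by ring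
    simpa [hindex, hc] using hrev
  obtain ⟨q, hqk, hkq, hiq, hqi⟩ :
      ∃ q : ℤ, q ≤ k ∧ k ≤ q + m ∧ i + 2 * m + 1 ≤ q ∧ q + 2 * m + 1 ≤ i + n := by
    obtain hk | hk := le_or_gt (i + 3 * m + 1) k
    · exact ⟨k - m, by omega⟩
    · exact ⟨k, by omega⟩
  have hkmem : e k ∈ seg e q (m + 1) := apply_mem_seg hqk (by omega)
  have hcr : c q ∈ seg e (i + m) (m + 1) :=
    h.symm.right_mem_of_left_mem (disjoint_seg he (by omega) (by omega)) (hdr ▸ hkmem)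
  have hcl : c q ∈ seg e (i - m) (m + 1) :=
    h.symm.right_mem_of_left_mem (disjoint_seg he (by omega) (by omega)) (hdl ▸ hkmem)
  exact (disjoint_seg he (by omega) (by omega)).notMem_of_mem_left hcl hcr

theorem left_ne_apply_of_near_right (h : OrthogonalExtensions (fun i => seg e i (m + 1)) c d)
    (he : Function.Injective e) (hn : 6 * m + 2 ≤ n)
    (hik : i + m + 2 ≤ k) (hki : k ≤ i + 2 * m) : c i ≠ e k := by
  intro hc
  have hcl : c i ∉ seg e (i - m) (m + 1) := hc ▸ apply_notMem_seg he (by omega) (by omega)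
  have hslide := seg_slidesInto_left he (show 2 * m + 2 ≤ n by omega) i
  have hdl : d (i - m) ∈ seg e i (m + 1) :=
    (h.right_mem_or_eq_of_left_notMem hslide.inter_eq hcl).resolve_right fun hcd =>
      h.symm.left_ne_apply_of_far he hn (by omega) (by omega) (by omega) (hcd ▸ hc)
  have hdr : d (i + m + 2) = e i :=
    h.right_eq_of_left_mem hslide hdl (disjoint_seg he (by omega) (by omega))
      (disjoint_seg he (by omega) (by omega)) (hc ▸ apply_mem_seg (by omega) (by omega))
  refine h.symm.left_ne_apply_of_far he hn (i := i + m + 2) (k := i + n)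
    (by omega) (by omega) (by omega) ?_
  simpa using hdr

theorem left_eq_apply_adjacent (h : OrthogonalExtensions (fun i => seg e i (m + 1)) c d)
    (he : Function.Injective e) (hn : 6 * m + 2 ≤ n) (hm : 1 ≤ m) (hrange : c i ∈ range e) :
    c i = e ((i - 1 : ℤ) : ZMod n) ∨ c i = e ((i + m + 1 : ℤ) : ZMod n) := by
  rw [← seg_card_eq_range (by omega) i, mem_seg] at hrange
  obtain ⟨k, hik, hkn, hk⟩ := hrange
  have hwindow : i + m + 1 ≤ k := by
    by_contra! hlt
    exact h.left_notMem i (hk ▸ apply_mem_seg hik (by omega))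
  have hfar : ¬(i + 2 * m + 1 ≤ k ∧ k + m + 1 ≤ i + n) := fun hfar =>
    h.left_ne_apply_of_far he hn hm hfar.1 hfar.2 hk.symm
  have hright : ¬(i + m + 2 ≤ k ∧ k ≤ i + 2 * m) := fun hnear =>
    h.left_ne_apply_of_near_right he hn hnear.1 hnear.2 hk.symm
  have hleft : ¬(i + n ≤ k + m ∧ k + 2 ≤ i + n) := fun hnear => by
    refine h.reverse.left_ne_apply_of_near_right (i := -m - i) (k := n - k)
      (he.comp neg_injective) hn (by omega) (by omega) ?_
    simpa using hk.symm
  obtain rfl | rfl : k = i - 1 + n ∨ k = i + m + 1 := by omega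
  · left
    simpa using hk.symm
  · exact .inr hk.symm

end OrthogonalExtensions

end Windows

/-! ### Circuits and cocircuits in a cyclic ordering -/

section Circuits

variable {M : Matroid α} {n t l m : ℕ} {e : ZMod n → α} {C D : Set α}

theorem Cct.inter_ne_singleton (hC : Cct M C) (hD : Cct M✶ D) (x : α) : C ∩ D ≠ {x} :=
  Matroid.IsCircuit.inter_isCocircuit_ne_singleton hC hD

theorem CyclicPropOrd.dual (h : CyclicPropOrd M t e) : CyclicPropOrd M✶ t e :=
  ⟨h.1, fun i => ⟨(h.2 i).2, by simpa using (h.2 i).1⟩⟩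

theorem CyclicPropOrd.exists_circuit_insert (h : CyclicPropOrd M (l + 1) e) (hl : l ≤ n)
    (i : ℤ) : ∃ x ∉ seg e i l, Cct M (insert x (seg e i l)) := by
  obtain ⟨C, hC, hcard, hsub⟩ := (h.2 i).1
  rw [Nat.add_sub_cancel] at hsub
  obtain ⟨x, hx, rfl⟩ := (exists_eq_insert_iff_ncard finite_seg).2
    ⟨hsub, by rw [hcard, ncard_seg h.1.1 hl]⟩
  exact ⟨x, hx, hC⟩

theorem CyclicPropOrd.circuit_seg_or_circuit_seg (h : CyclicPropOrd M (m + 2) e) (hm : 1 ≤ m)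
    (hn : 6 * m + 2 ≤ n) (i : ℤ) : Cct M (seg e i (m + 2)) ∨ Cct M (seg e (i + 1) (m + 2)) := by
  choose c hcW hc using h.exists_circuit_insert (by omega)
  choose d hdW hd using h.dual.exists_circuit_insert (by omega)
  have hext : OrthogonalExtensions (fun i => seg e i (m + 1)) c d :=
    ⟨hcW, hdW, fun i j => (hc i).inter_ne_singleton (hd j)⟩
  have hrange : c (i + 1) ∈ range e := by
    rw [h.1.2]
    exact Matroid.IsCircuit.subset_ground (hc (i + 1)) (mem_insert _ _)
  obtain hleft | hright := hext.left_eq_apply_adjacent h.1.1 hn hm hrange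
  · left
    rw [seg_succ_eq_insert_first]
    simpa [hleft] using hc (i + 1)
  · right
    rw [seg_succ_eq_insert_last]
    simpa [hright, add_assoc] using hc (i + 1)

end Circuits

/-! ### Alternating predicates on the integers -/

section Alternation

variable {P Q : ℤ → Prop} {i j r : ℤ}

theorem apply_add_one_iff_not (hP : ∀ i, P i ∨ P (i + 1)) (hQ : ∀ i, Q i ∨ Q (i + 1))
    (hPQ : ∀ i, P i → ¬Q (i + r)) (i : ℤ) : P (i + 1) ↔ ¬P i := by
  refine ⟨fun hsucc hi => ?_, (hP i).resolve_left⟩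
  refine (hQ (i + r)).elim (hPQ i hi) ?_
  simpa only [add_right_comm] using hPQ (i + 1) hsucc

theorem iff_of_emod_two_eq (hP : ∀ i, P (i + 1) ↔ ¬P i) (hij : j % 2 = i % 2) : P i ↔ P j := by
  have hperiod : Function.Periodic P 2 := fun i => by
    rw [show i + 2 = i + 1 + 1 by ring, hP, hP, not_not]
  obtain ⟨k, rfl⟩ : ∃ k, j = i + k * 2 := ⟨(j - i) / 2, by omega⟩
  exact (hperiod.int_mul k i).to_iff.symm

theorem iff_not_apply_add (hP : ∀ i, P i ∨ P (i + 1)) (hQ : ∀ i, Q i ∨ Q (i + 1))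
    (hPQ : ∀ i, P i → ¬Q (i + r)) (i : ℤ) : P i ↔ ¬Q (i + r) := by
  refine ⟨hPQ i, fun hq => ?_⟩
  by_contra hi
  have hsucc : Q (i + 1 + r) := by simpa only [add_right_comm] using (hQ (i + r)).resolve_left hq
  exact hPQ (i + 1) ((hP i).resolve_left hi) hsucc

end Alternation

/-- With `t ≥ 3` odd and `n ≥ 6t-10`: (i) each window of `t` consecutive
elements is a circuit or a cocircuit but not both; (ii) a window is a circuit iff the
shifted window is a cocircuit; (iii) circuit windows occur at indices of a fixed parity. -/
theorem statement_1 (M : Matroid α) (t n : ℕ) (ht : 3 ≤ t) (htodd : Odd t)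
    (hn : 6 * t - 10 ≤ n) (e : ZMod n → α) (he : CyclicPropOrd M t e) :
    (∀ i : ℤ, Xor' (Cct M (seg e i t)) (Cct M✶ (seg e i t))) ∧
    (∀ i : ℤ, Cct M (seg e i t) ↔ Cct M✶ (seg e (i + 1) t)) ∧
    (∀ i j : ℤ, j % 2 = i % 2 → Cct M (seg e i t) → Cct M (seg e j t)) := by
  obtain ⟨r, rfl⟩ := htodd
  obtain ⟨m, hm⟩ : ∃ m, 2 * r + 1 = m + 2 := ⟨2 * r - 1, by omega⟩
  set P : ℤ → Prop := fun i => Cct M (seg e i (2 * r + 1))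
  set Q : ℤ → Prop := fun i => Cct M✶ (seg e i (2 * r + 1))
  have hP (i : ℤ) : P i ∨ P (i + 1) := by
    simp only [P, hm] at he ⊢
    exact he.circuit_seg_or_circuit_seg (by omega) (by omega) i
  have hQ (i : ℤ) : Q i ∨ Q (i + 1) := by
    simp only [Q, hm] at he ⊢
    exact he.dual.circuit_seg_or_circuit_seg (by omega) (by omega) i
  have hPQ (i : ℤ) (hC : P i) (hD : Q (i + (2 * r : ℕ))) : False :=
    hC.inter_ne_singleton hD _ (seg_inter_seg_eq_singleton he.1.1 (by omega))
  have hstep : ∀ i, P (i + 1) ↔ ¬P i := apply_add_one_iff_not hP hQ hPQ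
  have hPnQ (i : ℤ) : P i ↔ ¬Q i := by
    simpa using (iff_of_emod_two_eq hstep (show (i - (2 * r : ℕ)) % 2 = i % 2 by omega)).trans
      (iff_not_apply_add hP hQ hPQ _)
  refine ⟨fun i => xor_iff_iff_not.2 (hPnQ i), fun i => ?_,
    fun _ _ hij => (iff_of_emod_two_eq hstep hij).1⟩
  rw [← not_iff_not, ← hstep, hPnQ]

end CyclicArr
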